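/- In any 2-crossed module (L →δ H →∂ G, ▷, {·,·}_p), for every h ∈ H and l ∈ L one has h ▷' l = {h, δ(l)}_p · (∂(h) ▷ l). -/

import Mathlib

/-- A 2-crossed module `(L --δ--> H --∂--> G, ▷, Peiffer lifting)`:
groups `G H L`, homomorphisms `δ : L → H` (field `δ`) and `∂ : H → G` (field `bd`)
with `∂ ∘ δ = 1`, left actions `▷` of `G` on `H` and `L` by automorphisms
(fields `actH`, `actL`; `G` acts on itself by conjugation), and the Peiffer
lifting `{·,·}_p : H × H → L` (field `pf`), subject to the usual axioms. -/
structure TwoCrossedModule (G H L : Type*) [Group G] [Group H] [Group L] where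
  δ : L →* H
  bd : H →* G
  actH : G →* MulAut H
  actL : G →* MulAut L
  pf : H → H → L
  comp_eq_one : ∀ l : L, bd (δ l) = 1
  -- (i) g ▷ ∂(h) = ∂(g ▷ h), where G acts on itself by conjugation
  act_bd : ∀ (g : G) (h : H), g * bd h * g⁻¹ = bd (actH g h)
  -- (i) g ▷ δ(l) = δ(g ▷ l)
  act_δ : ∀ (g : G) (l : L), actH g (δ l) = δ (actL g l)
  -- (ii) g ▷ {h₁,h₂}_p = {g ▷ h₁, g ▷ h₂}_p
  act_pf : ∀ (g : G) (h₁ h₂ : H), actL g (pf h₁ h₂) = pf (actH g h₁) (actH g h₂)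
  -- (iii) δ({h₁,h₂}_p) = h₁h₂h₁⁻¹·(∂(h₁) ▷ h₂⁻¹)
  δ_pf : ∀ h₁ h₂ : H, δ (pf h₁ h₂) = h₁ * h₂ * h₁⁻¹ * actH (bd h₁) h₂⁻¹
  -- (iv) {δ(l₁), δ(l₂)}_p = l₁l₂l₁⁻¹l₂⁻¹
  pf_δ_δ : ∀ l₁ l₂ : L, pf (δ l₁) (δ l₂) = l₁ * l₂ * l₁⁻¹ * l₂⁻¹
  -- (v) {h₁h₂, h₃}_p = {h₁, h₂h₃h₂⁻¹}_p · (∂(h₁) ▷ {h₂,h₃}_p)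
  pf_mul_left : ∀ h₁ h₂ h₃ : H,
    pf (h₁ * h₂) h₃ = pf h₁ (h₂ * h₃ * h₂⁻¹) * actL (bd h₁) (pf h₂ h₃)
  -- (vi) {h₁, h₂h₃}_p = {h₁,h₂}_p · {h₁,h₃}_p · {⟨h₁,h₃⟩_p⁻¹, ∂(h₁) ▷ h₂}_p,
  -- where ⟨h₁,h₃⟩_p = h₁h₃h₁⁻¹·(∂(h₁) ▷ h₃⁻¹) is the Peiffer commutator
  pf_mul_right : ∀ h₁ h₂ h₃ : H,
    pf h₁ (h₂ * h₃) = pf h₁ h₂ * pf h₁ h₃ *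
      pf (h₁ * h₃ * h₁⁻¹ * actH (bd h₁) h₃⁻¹)⁻¹ (actH (bd h₁) h₂)
  -- (vii) {δ(l), h}_p · {h, δ(l)}_p = l·(∂(h) ▷ l⁻¹)
  pf_δ : ∀ (h : H) (l : L), pf (δ l) h * pf h (δ l) = l * actL (bd h) l⁻¹

namespace TwoCrossedModule

variable {G H L : Type*} [Group G] [Group H] [Group L]

/-- The map `▷' : H × L → L`, defined by `h ▷' l = l · {δ(l)⁻¹, h}_p`. -/
def act' (X : TwoCrossedModule G H L) (h : H) (l : L) : L :=
  l * X.pf (X.δ l)⁻¹ h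

end TwoCrossedModule

/-!
Axioms (iii) and (vi) together say that `{h₁, h₂h₃}_p = {h₁, h₂}_p · ((∂(h₁) ▷ h₂) ▷' {h₁, h₃}_p)`,
while `δ(m) ▷' l = m l m⁻¹` by (iv). Hence `{δ(l), δ(l)⁻¹ h δ(l)}_p = l⁻¹ {δ(l), h}_p l`, and
expanding `{δ(l) δ(l)⁻¹, h}_p = 1` by (v) gives `h ▷' l = {δ(l), h}_p⁻¹ l`, which (vii) turns into
the claim.
-/

namespace TwoCrossedModule

variable {G H L : Type*} [Group G] [Group H] [Group L] (X : TwoCrossedModule G H L)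

theorem pf_one_left (h : H) : X.pf 1 h = 1 := by
  simpa using X.pf_mul_left 1 1 h

theorem actH_bd_δ (l : L) (h : H) : X.actH (X.bd (X.δ l)) h = h := by
  rw [X.comp_eq_one, map_one, MulAut.one_apply]

theorem actL_bd_δ (l m : L) : X.actL (X.bd (X.δ l)) m = m := by
  rw [X.comp_eq_one, map_one, MulAut.one_apply]

theorem act'_one_right (h : H) : X.act' h 1 = 1 := by
  rw [act', map_one, inv_one, pf_one_left, one_mul]

theorem act'_δ (m l : L) : X.act' (X.δ m) l = m * l * m⁻¹ := by
  rw [act', ← map_inv, X.pf_δ_δ]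
  group

theorem pf_mul_right_eq_mul_act' (h₁ h₂ h₃ : H) :
    X.pf h₁ (h₂ * h₃) = X.pf h₁ h₂ * X.act' (X.actH (X.bd h₁) h₂) (X.pf h₁ h₃) := by
  rw [X.pf_mul_right, act', X.δ_pf, mul_assoc]

theorem pf_δ_δ_mul (l m : L) (h : H) :
    X.pf (X.δ l) (X.δ m * h) = l * m * l⁻¹ * X.pf (X.δ l) h * m⁻¹ := by
  rw [pf_mul_right_eq_mul_act', actH_bd_δ, act'_δ, X.pf_δ_δ]
  group

theorem pf_δ_mul_δ_self (l : L) (h : H) :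
    X.pf (X.δ l) (h * X.δ l) = X.pf (X.δ l) h := by
  have pf_self : X.pf (X.δ l) (X.δ l) = 1 := by
    rw [X.pf_δ_δ]
    group
  rw [pf_mul_right_eq_mul_act', pf_self, act'_one_right, mul_one]

theorem pf_δ_conj_inv (l : L) (h : H) :
    X.pf (X.δ l) ((X.δ l)⁻¹ * h * X.δ l) = l⁻¹ * X.pf (X.δ l) h * l := by
  rw [pf_δ_mul_δ_self, ← map_inv, pf_δ_δ_mul]
  group

theorem pf_δ_inv_left (l : L) (h : H) :
    X.pf (X.δ l)⁻¹ h = l⁻¹ * (X.pf (X.δ l) h)⁻¹ * l := by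
  have conj_mul_eq_one : l⁻¹ * X.pf (X.δ l) h * l * X.pf (X.δ l)⁻¹ h = 1 := by
    calc l⁻¹ * X.pf (X.δ l) h * l * X.pf (X.δ l)⁻¹ h
        = X.pf (X.δ l * (X.δ l)⁻¹) h := by
          rw [X.pf_mul_left, inv_inv, pf_δ_conj_inv, actL_bd_δ]
      _ = 1 := by rw [mul_inv_cancel, pf_one_left]
  rw [eq_inv_of_mul_eq_one_right conj_mul_eq_one]
  group

theorem act'_eq_pf_inv_mul (h : H) (l : L) : X.act' h l = (X.pf (X.δ l) h)⁻¹ * l := by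
  rw [act', pf_δ_inv_left]
  group

end TwoCrossedModule

/-- In any 2-crossed module, `h ▷' l = {h, δ(l)}_p · (∂(h) ▷ l)`. -/
theorem act'_eq_pf_mul_act {G H L : Type*} [Group G] [Group H] [Group L]
    (X : TwoCrossedModule G H L) (h : H) (l : L) :
    X.act' h l = X.pf h (X.δ l) * X.actL (X.bd h) l := by
  have pf_mul_pf : X.pf (X.δ l) h * X.pf h (X.δ l) = l * (X.actL (X.bd h) l)⁻¹ := by
    rw [X.pf_δ, map_inv]
  rw [X.act'_eq_pf_inv_mul, eq_inv_mul_of_mul_eq pf_mul_pf]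
  group
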